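/- Let (P_t)_{t≥0} be an increasing family of orthogonal projections on H and let f : [0,∞) → B(H) be adapted-commuting with respect to (P_t) and norm-continuous (continuous as a map into B(H) with the operator norm). Fix an interval [a,b] ⊆ [0,∞) and ξ ∈ H. Then there exists v ∈ H such that for every ε > 0 there is δ > 0 with ‖σ_θ ξ − v‖ < ε for every partition θ of [a,b] of mesh less than δ (i.e. σ_θ ξ converges as the mesh of θ tends to 0). -/

import Mathlib

/-- `sigmaSum f P θ` is the operator sum σ_θ = Σ_{k=1}^m f(t_{k−1})(P_{t_k} − P_{t_{k−1}})
where t₀ < t₁ < ⋯ < tₘ is the increasing enumeration of the finite set θ. -/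
noncomputable def sigmaSum {H : Type*} [NormedAddCommGroup H] [InnerProductSpace ℂ H]
    (f P : ℝ → H →L[ℂ] H) (θ : Finset ℝ) : H →L[ℂ] H :=
  (((θ.sort (· ≤ ·)).zip (θ.sort (· ≤ ·)).tail).map
    (fun p => f p.1 ∘L (P p.2 - P p.1))).sum

/-- `IsPartitionOf a b θ`: θ is a partition a = t₀ < t₁ < ⋯ < tₘ = b of [a,b]. -/
def IsPartitionOf (a b : ℝ) (θ : Finset ℝ) : Prop :=
  a ∈ θ ∧ b ∈ θ ∧ ∀ x ∈ θ, x ∈ Set.Icc a b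

/-- `meshOf θ` is the mesh max_{1≤k≤m}(t_k − t_{k−1}) of the partition θ. -/
noncomputable def meshOf (θ : Finset ℝ) : ℝ :=
  (((θ.sort (· ≤ ·)).zip (θ.sort (· ≤ ·)).tail).map (fun p => p.2 - p.1)).foldr max 0

section Helpers

variable {H : Type*} [NormedAddCommGroup H] [InnerProductSpace ℂ H]

/-- The sum along consecutive entries of a list. -/
noncomputable def listSum (g P : ℝ → H →L[ℂ] H) (l : List ℝ) : H →L[ℂ] H :=
  ((l.zip l.tail).map (fun p => g p.1 ∘L (P p.2 - P p.1))).sum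

theorem listSum_nil (g P : ℝ → H →L[ℂ] H) : listSum g P [] = 0 := by simp [listSum]

theorem listSum_single (g P : ℝ → H →L[ℂ] H) (x : ℝ) : listSum g P [x] = 0 := by
  simp [listSum]

theorem listSum_cons (g P : ℝ → H →L[ℂ] H) (x y : ℝ) (l : List ℝ) :
    listSum g P (x :: y :: l) = g x ∘L (P y - P x) + listSum g P (y :: l) := by
  simp [listSum]

theorem listSum_congr (g g' P : ℝ → H →L[ℂ] H) (l : List ℝ) (h : ∀ x ∈ l, g x = g' x) :
    listSum g P l = listSum g' P l := by
  induction l with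
  | nil => simp [listSum_nil]
  | cons x l ih =>
    cases l with
    | nil => simp [listSum_single]
    | cons y l =>
      rw [listSum_cons, listSum_cons, ih (fun z hz => h z (List.mem_cons_of_mem _ hz)),
        h x (by simp)]

theorem listSum_sub (g g' P : ℝ → H →L[ℂ] H) (l : List ℝ) :
    listSum (fun x => g x - g' x) P l = listSum g P l - listSum g' P l := by
  induction l with
  | nil => simp [listSum_nil]
  | cons x l ih =>
    cases l with
    | nil => simp [listSum_single]
    | cons y l =>
      rw [listSum_cons, listSum_cons, listSum_cons, ih, ContinuousLinearMap.sub_comp]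
      abel

theorem listSum_orderedInsert (g P : ℝ → H →L[ℂ] H) (x : ℝ) (l : List ℝ)
    (hl : l.Pairwise (· ≤ ·)) (hx : x ∉ l)
    (h1 : ∃ s ∈ l, s ≤ x) (h2 : ∃ s ∈ l, x ≤ s)
    (hg : ∀ s ∈ l, s ≤ x → (∀ y ∈ l, y ≤ s ∨ x ≤ y) → g x = g s) :
    listSum g P (l.orderedInsert (· ≤ ·) x) = listSum g P l := by
  induction l with
  | nil => simp at h1
  | cons s l ih =>
    have hs : ∀ t ∈ l, s ≤ t := (List.pairwise_cons.1 hl).1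
    have hsx : s ≤ x := by
      obtain ⟨t, ht, htx⟩ := h1
      rcases List.mem_cons.1 ht with rfl | ht
      · exact htx
      · exact (hs t ht).trans htx
    have hsx' : ¬ x ≤ s := fun h => hx (by simp [le_antisymm h hsx])
    cases l with
    | nil => simp [hsx'] at h2
    | cons t l =>
      have ht : ∀ u ∈ l, t ≤ u := (List.pairwise_cons.1 (List.pairwise_cons.1 hl).2).1
      by_cases hxt : x ≤ t
      · rw [List.orderedInsert_of_not_le (· ≤ ·) _ hsx', List.orderedInsert_cons_of_le (· ≤ ·) _ hxt,
          listSum_cons, listSum_cons, listSum_cons]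
        have : g x = g s := by
          apply hg s (by simp) hsx
          intro y hy
          rcases List.mem_cons.1 hy with rfl | hy
          · exact Or.inl le_rfl
          · rcases List.mem_cons.1 hy with rfl | hy
            · exact Or.inr hxt
            · exact Or.inr (hxt.trans (ht y hy))
        rw [this, ← add_assoc, ← ContinuousLinearMap.comp_add]
        congr 2
        abel
      · have key := ih (List.pairwise_cons.1 hl).2 (fun h => hx (List.mem_cons_of_mem _ h))
          ⟨t, by simp, (not_le.1 hxt).le⟩ (by
            obtain ⟨u, hu, hxu⟩ := h2
            rcases List.mem_cons.1 hu with rfl | hu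
            · exact absurd hxu hsx'
            · exact ⟨u, hu, hxu⟩) (by
            intro u hu hux hy
            apply hg u (List.mem_cons_of_mem _ hu) hux
            intro y hyl
            rcases List.mem_cons.1 hyl with rfl | hyl
            · exact Or.inl (hs u hu)
            · exact hy y hyl)
        rw [List.orderedInsert_of_not_le (· ≤ ·) _ hsx']
        rw [List.orderedInsert_of_not_le (· ≤ ·) _ hxt] at key ⊢
        rw [listSum_cons, listSum_cons, key]

theorem sort_insert_eq (x : ℝ) (θ : Finset ℝ) (hx : x ∉ θ) :
    (insert x θ).sort (· ≤ ·) = (θ.sort (· ≤ ·)).orderedInsert (· ≤ ·) x := by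
  have hp : List.Perm ((insert x θ).sort (· ≤ ·))
      ((θ.sort (· ≤ ·)).orderedInsert (· ≤ ·) x) := by
    refine List.Perm.trans ?_ (List.perm_orderedInsert _ _ _).symm
    rw [← Multiset.coe_eq_coe, ← Multiset.cons_coe, Finset.sort_eq, Finset.sort_eq,
      Finset.insert_val_of_notMem hx]
  exact hp.eq_of_pairwise' (Finset.pairwise_sort _ _)
    (List.Pairwise.orderedInsert _ _ (Finset.pairwise_sort _ _))

/-- The last point of `θ` that is at most `x`. -/
noncomputable def lastPt (θ : Finset ℝ) (x : ℝ) : ℝ := sSup ((θ : Set ℝ) ∩ Set.Iic x)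

theorem lastPt_eq_of_mem {θ : Finset ℝ} {x : ℝ} (hx : x ∈ θ) : lastPt θ x = x :=
  IsGreatest.csSup_eq ⟨⟨hx, Set.mem_Iic.2 le_rfl⟩, fun _ h => h.2⟩

theorem lastPt_eq {θ : Finset ℝ} {x s : ℝ} (hs : s ≤ x) (h : ∀ y ∈ θ, y ≤ s ∨ x < y) :
    lastPt θ x = lastPt θ s := by
  unfold lastPt
  congr 1
  ext y
  constructor
  · rintro ⟨hy, hyx⟩
    refine ⟨hy, ?_⟩
    rcases h y hy with h | h
    · exact h
    · exact absurd hyx (not_le.2 h)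
  · rintro ⟨hy, hys⟩
    exact ⟨hy, le_trans hys hs⟩

theorem lastPt_mem {θ : Finset ℝ} {x s : ℝ} (hs : s ∈ θ) (hsx : s ≤ x) :
    lastPt θ x ∈ θ ∧ lastPt θ x ≤ x ∧ s ≤ lastPt θ x := by
  have hfin : ((θ : Set ℝ) ∩ Set.Iic x).Finite := θ.finite_toSet.inter_of_left _
  have hne : ((θ : Set ℝ) ∩ Set.Iic x).Nonempty := ⟨s, hs, hsx⟩
  have hm := hne.csSup_mem hfin
  exact ⟨hm.1, hm.2, le_csSup hfin.bddAbove ⟨hs, hsx⟩⟩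

theorem listSum_refine (f P : ℝ → H →L[ℂ] H) {a b : ℝ} (θ : Finset ℝ)
    (hθ : IsPartitionOf a b θ) (η : Finset ℝ) (hη : ∀ x ∈ η, x ∈ Set.Icc a b) :
    listSum (fun x => f (lastPt θ x)) P ((η ∪ θ).sort (· ≤ ·)) = sigmaSum f P θ := by
  induction η using Finset.induction_on with
  | empty =>
    rw [Finset.empty_union]
    apply listSum_congr (g' := f)
    intro x hx
    rw [lastPt_eq_of_mem ((Finset.mem_sort _).1 hx)]
  | insert x η hx ih =>
    have ih' := ih (fun y hy => hη y (Finset.mem_insert_of_mem hy))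
    have hxab := hη x (Finset.mem_insert_self _ _)
    rw [Finset.insert_union]
    by_cases hxm : x ∈ η ∪ θ
    · rw [Finset.insert_eq_of_mem hxm]
      exact ih'
    · rw [sort_insert_eq _ _ hxm, listSum_orderedInsert, ih']
      · exact Finset.pairwise_sort _ _
      · simpa using hxm
      · exact ⟨a, by simp [hθ.1], hxab.1⟩
      · exact ⟨b, by simp [hθ.2.1], hxab.2⟩
      · intro s _ hsx hy
        have : lastPt θ x = lastPt θ s := by
          apply lastPt_eq hsx
          intro y hyθ
          rcases hy y (by simp [hyθ]) with h | h
          · exact Or.inl h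
          · refine Or.inr (lt_of_le_of_ne h ?_)
            rintro rfl
            exact hxm (by simp [hyθ])
        rw [this]

theorem exists_near (δ : ℝ) (l : List ℝ) (hl : l.Pairwise (· ≤ ·)) (x : ℝ) (hδ : 0 < δ)
    (h1 : ∃ s ∈ l, s ≤ x) (h2 : ∃ s ∈ l, x ≤ s)
    (hm : ((l.zip l.tail).map (fun p => p.2 - p.1)).foldr max 0 < δ) :
    ∃ s ∈ l, s ≤ x ∧ x - s < δ := by
  induction l with
  | nil => simp at h1
  | cons s l ih =>
    have hs : ∀ t ∈ l, s ≤ t := (List.pairwise_cons.1 hl).1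
    have hsx : s ≤ x := by
      obtain ⟨t, ht, htx⟩ := h1
      rcases List.mem_cons.1 ht with rfl | ht
      · exact htx
      · exact (hs t ht).trans htx
    cases l with
    | nil =>
      refine ⟨s, by simp, hsx, ?_⟩
      obtain ⟨u, hu, hxu⟩ := h2
      simp at hu
      subst hu
      linarith
    | cons t l =>
      simp only [List.tail_cons, List.zip_cons_cons, List.map_cons, List.foldr_cons,
        max_lt_iff] at hm ih
      by_cases hxt : x ≤ t
      · exact ⟨s, by simp, hsx, by linarith [hm.1]⟩
      · have hxt' := not_le.1 hxt
        obtain ⟨u, hu, h⟩ := ih (List.pairwise_cons.1 hl).2 ⟨t, by simp, hxt'.le⟩ (by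
            obtain ⟨u, hu, hxu⟩ := h2
            rcases List.mem_cons.1 hu with rfl | hu
            · exact absurd (hs t (by simp)) (by linarith)
            · exact ⟨u, hu, hxu⟩) hm.2
        exact ⟨u, List.mem_cons_of_mem _ hu, h⟩

theorem pyth (u w : H) (h : inner ℂ u w = 0) : ‖u + w‖ ^ 2 = ‖u‖ ^ 2 + ‖w‖ ^ 2 := by
  have := norm_add_sq_eq_norm_sq_add_norm_sq_of_inner_eq_zero u w h
  nlinarith

theorem listSum_bound [CompleteSpace H] (P : ℝ → H →L[ℂ] H)
    (hP_proj : ∀ s, 0 ≤ s → IsSelfAdjoint (P s) ∧ P s ∘L P s = P s)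
    (hP_mono : ∀ s u, 0 ≤ s → s ≤ u → P s ∘L P u = P s ∧ P u ∘L P s = P s)
    (ξ : H) (h : ℝ → H →L[ℂ] H) (ε : ℝ) (l : List ℝ) (hl : l.Pairwise (· ≤ ·))
    (h0 : ∀ x ∈ l, 0 ≤ x)
    (hc : ∀ x ∈ l, ∀ u, x ≤ u → h x ∘L P u = P u ∘L h x)
    (hε : ∀ x ∈ l, ‖h x‖ ≤ ε) :
    ∀ x ∈ l.head?, P x (listSum h P l ξ) = 0 ∧
      ‖listSum h P l ξ‖ ^ 2 ≤ ε ^ 2 * ‖ξ - P x ξ‖ ^ 2 := by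
  induction l with
  | nil => simp
  | cons x l ih =>
    intro x' hx'
    obtain rfl : x = x' := by simpa using hx'
    cases l with
    | nil =>
      simp only [listSum_single, zero_apply, map_zero, norm_zero, true_and]
      have : (0 : ℝ) ≤ ε ^ 2 * ‖ξ - P x ξ‖ ^ 2 := by positivity
      simpa using this
    | cons y l =>
      obtain ⟨i1, i2⟩ := ih (List.pairwise_cons.1 hl).2
        (fun z hz => h0 z (List.mem_cons_of_mem _ hz))
        (fun z hz => hc z (List.mem_cons_of_mem _ hz))
        (fun z hz => hε z (List.mem_cons_of_mem _ hz)) y (by simp)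
      have hx0 : 0 ≤ x := h0 x (by simp)
      have hxy : x ≤ y := (List.pairwise_cons.1 hl).1 y (by simp)
      have hy0 : 0 ≤ y := hx0.trans hxy
      have pxx : ∀ v, P x (P x v) = P x v := fun v => DFunLike.congr_fun (hP_proj x hx0).2 v
      have pyy : ∀ v, P y (P y v) = P y v := fun v => DFunLike.congr_fun (hP_proj y hy0).2 v
      have pxy : ∀ v, P x (P y v) = P x v := fun v => DFunLike.congr_fun (hP_mono x y hx0 hxy).1 v
      have pyx : ∀ v, P y (P x v) = P x v := fun v => DFunLike.congr_fun (hP_mono x y hx0 hxy).2 v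
      have cx : ∀ v, h x (P x v) = P x (h x v) :=
        fun v => DFunLike.congr_fun (hc x (by simp) x le_rfl) v
      have cy : ∀ v, h x (P y v) = P y (h x v) :=
        fun v => DFunLike.congr_fun (hc x (by simp) y hxy) v
      have orth : ∀ v w : H, P y w = 0 → inner ℂ (P y v) w = 0 := by
        intro v w hw
        have := (ContinuousLinearMap.isSelfAdjoint_iff_isSymmetric.1 (hP_proj y hy0).1) v w
        simp only [ContinuousLinearMap.coe_coe] at this
        rw [this, hw, inner_zero_right]
      set w := listSum h P (y :: l) ξ with hw
      have e : listSum h P (x :: y :: l) ξ = h x (P y ξ - P x ξ) + w := by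
        rw [listSum_cons]; simp [hw]
      have e2 : h x (P y ξ - P x ξ) = P y (h x (P y ξ - P x ξ)) := by
        rw [← cy, map_sub (P y), pyy, pyx]
      rw [e]
      constructor
      · rw [map_add, ← cx, map_sub (P x), pxy, pxx, ← pxy w, i1]
        simp
      · rw [pyth _ _ (by rw [e2]; exact orth _ _ i1)]
        have e3 : ξ - P x ξ = (P y ξ - P x ξ) + (ξ - P y ξ) := by abel
        have e4 : P y ξ - P x ξ = P y (P y ξ - P x ξ) := by rw [map_sub (P y), pyy, pyx]
        have e5 : ‖ξ - P x ξ‖ ^ 2 = ‖P y ξ - P x ξ‖ ^ 2 + ‖ξ - P y ξ‖ ^ 2 := by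
          rw [e3]
          apply pyth
          rw [e4]
          exact orth _ _ (by rw [map_sub, pyy, sub_self])
        rw [e5]
        have e6 : ‖h x (P y ξ - P x ξ)‖ ≤ ε * ‖P y ξ - P x ξ‖ :=
          (h x).le_of_opNorm_le (hε x (by simp)) _
        have e7 := pow_le_pow_left₀ (norm_nonneg _) e6 2
        rw [mul_pow] at e7
        linarith

theorem refine_bound [CompleteSpace H]
    (a b : ℝ) (ha : 0 ≤ a)
    (P : ℝ → H →L[ℂ] H)
    (hP_proj : ∀ s, 0 ≤ s → IsSelfAdjoint (P s) ∧ P s ∘L P s = P s)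
    (hP_mono : ∀ s u, 0 ≤ s → s ≤ u → P s ∘L P u = P s ∧ P u ∘L P s = P s)
    (f : ℝ → H →L[ℂ] H)
    (hf_adapted : ∀ s u, 0 ≤ s → s ≤ u → f s ∘L P u = P u ∘L f s)
    (ξ : H) (ε δ : ℝ) (hε : 0 < ε) (hδ : 0 < δ)
    (huc : ∀ s ∈ Set.Icc a b, ∀ t ∈ Set.Icc a b, dist s t < δ → dist (f s) (f t) < ε)
    (θ : Finset ℝ) (hθ : IsPartitionOf a b θ) (hm : meshOf θ < δ)
    (η : Finset ℝ) (hη : ∀ x ∈ η, x ∈ Set.Icc a b) :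
    ‖sigmaSum f P (η ∪ θ) ξ - sigmaSum f P θ ξ‖ ≤ ε * ‖ξ‖ := by
  rw [← listSum_refine f P θ hθ η hη]
  change ‖listSum f P ((η ∪ θ).sort (· ≤ ·)) ξ - _‖ ≤ _
  rw [← sub_apply, ← listSum_sub]
  have hmem : ∀ x ∈ (η ∪ θ).sort (· ≤ ·), x ∈ Set.Icc a b := by
    intro x hx
    rcases Finset.mem_union.1 ((Finset.mem_sort _).1 hx) with h | h
    · exact hη x h
    · exact hθ.2.2 x h
  have key := listSum_bound P hP_proj hP_mono ξ (fun x => f x - f (lastPt θ x)) ε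
    ((η ∪ θ).sort (· ≤ ·)) (Finset.pairwise_sort _ _)
    (fun x hx => ha.trans (hmem x hx).1)
    (by
      intro x hx u hxu
      obtain ⟨q1, q2, q3⟩ := lastPt_mem hθ.1 (hmem x hx).1
      rw [ContinuousLinearMap.sub_comp, ContinuousLinearMap.comp_sub,
        hf_adapted x u (ha.trans (hmem x hx).1) hxu,
        hf_adapted _ u (ha.trans q3) (q2.trans hxu)])
    (by
      intro x hx
      obtain ⟨s, hs, hsx, hd⟩ := exists_near δ (θ.sort (· ≤ ·)) (Finset.pairwise_sort _ _) x hδ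
        ⟨a, by simp [hθ.1], (hmem x hx).1⟩ ⟨b, by simp [hθ.2.1], (hmem x hx).2⟩ hm
      obtain ⟨q1, q2, q3⟩ := lastPt_mem ((Finset.mem_sort _).1 hs) hsx
      rw [← dist_eq_norm]
      refine (huc x (hmem x hx) _ (hθ.2.2 _ q1) ?_).le
      rw [Real.dist_eq, abs_lt]
      constructor <;> linarith)
  have ham : a ∈ (η ∪ θ).sort (· ≤ ·) := by simp [hθ.1]
  obtain ⟨x, l, hxl⟩ := List.exists_cons_of_ne_nil (List.ne_nil_of_mem ham)
  have hx0 : 0 ≤ x := ha.trans (hmem x (by rw [hxl]; simp)).1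
  rw [hxl] at key ⊢
  obtain ⟨-, k2⟩ := key x (by simp)
  have hle : ‖ξ - P x ξ‖ ^ 2 ≤ ‖ξ‖ ^ 2 := by
    have pxx : P x (P x ξ) = P x ξ := DFunLike.congr_fun (hP_proj x hx0).2 ξ
    have h1 : inner ℂ (P x ξ) (ξ - P x ξ) = 0 := by
      have := (ContinuousLinearMap.isSelfAdjoint_iff_isSymmetric.1 (hP_proj x hx0).1) ξ (ξ - P x ξ)
      simp only [ContinuousLinearMap.coe_coe] at this
      rw [this, map_sub, pxx, sub_self, inner_zero_right]
    have h2 := pyth _ _ h1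
    rw [add_sub_cancel] at h2
    nlinarith [sq_nonneg ‖P x ξ‖]
  apply le_of_sq_le_sq _ (by positivity)
  rw [mul_pow]
  exact k2.trans (by gcongr)

end Helpers

/-- For increasing projections (P_t) and adapted-commuting, norm-continuous
f, for every ξ ∈ H the vectors σ_θ ξ converge in norm as the mesh of the partition θ of
[a,b] tends to 0. -/
theorem sigma_mesh_converges
    {H : Type*} [NormedAddCommGroup H] [InnerProductSpace ℂ H] [CompleteSpace H]
    (a b : ℝ) (ha : 0 ≤ a) (hab : a < b)
    (P : ℝ → H →L[ℂ] H)
    (hP_proj : ∀ s, 0 ≤ s → IsSelfAdjoint (P s) ∧ P s ∘L P s = P s)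
    (hP_mono : ∀ s u, 0 ≤ s → s ≤ u → P s ∘L P u = P s ∧ P u ∘L P s = P s)
    (f : ℝ → H →L[ℂ] H)
    (hf_adapted : ∀ s u, 0 ≤ s → s ≤ u → f s ∘L P u = P u ∘L f s)
    (hf_cont : ContinuousOn f (Set.Ici (0 : ℝ)))
    (ξ : H) :
    ∃ v : H, ∀ ε > (0 : ℝ), ∃ δ > (0 : ℝ), ∀ θ : Finset ℝ,
      IsPartitionOf a b θ → meshOf θ < δ → ‖sigmaSum f P θ ξ - v‖ < ε := by
  classical
  have main : ∀ ε > (0 : ℝ), ∃ δ > (0 : ℝ), ∀ θ₁ θ₂ : Finset ℝ,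
      IsPartitionOf a b θ₁ → meshOf θ₁ < δ → IsPartitionOf a b θ₂ → meshOf θ₂ < δ →
      ‖sigmaSum f P θ₁ ξ - sigmaSum f P θ₂ ξ‖ < ε := by
    intro ε hε
    have hcont : ContinuousOn f (Set.Icc a b) :=
      hf_cont.mono (fun x hx => ha.trans hx.1)
    have huc := isCompact_Icc.uniformContinuousOn_of_continuous hcont
    have hε' : 0 < ε / (4 * (‖ξ‖ + 1)) := by positivity
    obtain ⟨δ, hδ, hd⟩ := Metric.uniformContinuousOn_iff.1 huc _ hε'
    refine ⟨δ, hδ, fun θ₁ θ₂ h₁ m₁ h₂ m₂ => ?_⟩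
    have b₁ := refine_bound a b ha P hP_proj hP_mono f hf_adapted ξ _ δ hε' hδ hd θ₁ h₁ m₁ θ₂ h₂.2.2
    have b₂ := refine_bound a b ha P hP_proj hP_mono f hf_adapted ξ _ δ hε' hδ hd θ₂ h₂ m₂ θ₁ h₁.2.2
    rw [Finset.union_comm, norm_sub_rev] at b₁
    have hb : ε / (4 * (‖ξ‖ + 1)) * ‖ξ‖ ≤ ε / 4 := by
      rw [div_mul_eq_mul_div, div_le_div_iff₀ (by positivity) (by norm_num)]
      nlinarith [norm_nonneg ξ]
    have := norm_sub_le_norm_sub_add_norm_sub (sigmaSum f P θ₁ ξ) (sigmaSum f P (θ₁ ∪ θ₂) ξ)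
      (sigmaSum f P θ₂ ξ)
    linarith
  by_cases hex : ∀ n : ℕ, ∃ θ : Finset ℝ, IsPartitionOf a b θ ∧ meshOf θ < 1 / ((n : ℝ) + 1)
  · choose θ hθ hm using hex
    have small : ∀ δ > (0 : ℝ), ∃ N : ℕ, ∀ n ≥ N, meshOf (θ n) < δ := by
      intro δ hδ
      obtain ⟨N, hN⟩ := exists_nat_one_div_lt hδ
      refine ⟨N, fun n hn => (hm n).trans_le (le_trans ?_ hN.le)⟩
      exact Nat.one_div_le_one_div hn
    have hcau : CauchySeq (fun n => sigmaSum f P (θ n) ξ) := by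
      rw [Metric.cauchySeq_iff]
      intro ε hε
      obtain ⟨δ, hδ, hd⟩ := main ε hε
      obtain ⟨N, hN⟩ := small δ hδ
      refine ⟨N, fun m hm n hn => ?_⟩
      rw [dist_eq_norm]
      exact hd _ _ (hθ m) (hN m hm) (hθ n) (hN n hn)
    obtain ⟨v, hv⟩ := cauchySeq_tendsto_of_complete hcau
    refine ⟨v, fun ε hε => ?_⟩
    obtain ⟨δ, hδ, hd⟩ := main (ε / 2) (by linarith)
    refine ⟨δ, hδ, fun η hη hmη => ?_⟩
    obtain ⟨N, hN⟩ := small δ hδ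
    obtain ⟨M, hM⟩ := Metric.tendsto_atTop.1 hv (ε / 2) (by linarith)
    have h1 := hd η (θ (max N M)) hη hmη (hθ _) (hN _ (le_max_left _ _))
    have h2 := hM (max N M) (le_max_right _ _)
    rw [dist_eq_norm] at h2
    have := norm_sub_le_norm_sub_add_norm_sub (sigmaSum f P η ξ)
      (sigmaSum f P (θ (max N M)) ξ) v
    linarith
  · push Not at hex
    obtain ⟨n, hn⟩ := hex
    exact ⟨0, fun ε _ => ⟨1 / ((n : ℝ) + 1), by positivity,
      fun θ h1 h2 => absurd h2 (not_lt.2 (hn θ h1))⟩⟩
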